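/- The derivation module D(𝒜₆₉) of the central hyperplane arrangement 𝒜₆₉ in ℂ⁴ with defining equation Q₆₉ = x·y·z·w·(x+y)·(x−y+z)·(x−y−w)·(x+y−z−w) is not a free module over S = ℂ[x,y,z,w]. -/

import Mathlib

open MvPolynomial

noncomputable section

/-- The polynomial ring `S = ℂ[x,y,z,w]`, with `x = X 0`, `y = X 1`, `z = X 2`, `w = X 3`. -/
abbrev S4 : Type := MvPolynomial (Fin 4) ℂ

/-- The linear form `c₀·x + c₁·y + c₂·z + c₃·w` with coefficient vector `c`. -/
noncomputable def linForm (c : Fin 4 → ℂ) : S4 := ∑ i, C (c i) * X i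

/-- A polynomial derivation `θ = a₁∂ₓ + a₂∂_y + a₃∂_z + a₄∂_w` of `S` is identified with
its coefficient tuple `a : Fin 4 → S`; the linear map `derMap f` sends `a` to `θ(f)`. -/
noncomputable def derMap (f : S4) : (Fin 4 → S4) →ₗ[S4] S4 where
  toFun a := ∑ i, a i * pderiv i f
  map_add' a b := by simp [add_mul, Finset.sum_add_distrib]
  map_smul' c a := by simp [Finset.mul_sum, mul_assoc]

/-- The derivation module `D(𝒜)` of the central arrangement whose hyperplanes are the kernels
of the linear forms `linForm (α H)`: all derivations `θ` with `θ(α_H) ∈ S·α_H` for every `H`. -/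
noncomputable def derivModule {ι : Type} (α : ι → (Fin 4 → ℂ)) :
    Submodule S4 (Fin 4 → S4) :=
  ⨅ H, Submodule.comap (derMap (linForm (α H))) (Ideal.span {linForm (α H)})

end

/-- The coefficient vectors of the eight linear factors of Q = xyzw(x+y)(x-y+z)(x-y-w)(x+y-z-w), defining the rigid Cynk–Szemberg octic arrangement 𝒜₆₉ ⊂ ℙ³. -/
noncomputable def A69 : Fin 8 → (Fin 4 → ℂ) :=
  ![![1, 0, 0, 0],
    ![0, 1, 0, 0],
    ![0, 0, 1, 0],
    ![0, 0, 0, 1],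
    ![1, 1, 0, 0],
    ![1, -1, 1, 0],
    ![1, -1, 0, -1],
    ![1, 1, -1, -1]]

/-- A point lying on exactly four of the hyperplanes, which are in general position in rank three. -/
noncomputable def quadruplePoint : Fin 4 → ℂ := ![1, -1, 0, 0]

/-- The product of the forms of `A69` not vanishing at `quadruplePoint`. -/
noncomputable def awayForms : S4 :=
  X 0 * X 1 * (X 0 - X 1 + X 2) * (X 0 - X 1 - X 3)

theorem derMap_linForm (c : Fin 4 → ℂ) (θ : Fin 4 → S4) :
    derMap (linForm c) θ = ∑ i, C (c i) * θ i := by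
  simp [derMap, linForm, pderiv_X, Pi.single_apply, mul_comm]

theorem mem_derivModule_A69 (θ : Fin 4 → S4) : θ ∈ derivModule A69 ↔
    (X 0 ∣ θ 0) ∧ (X 1 ∣ θ 1) ∧ (X 2 ∣ θ 2) ∧ (X 3 ∣ θ 3) ∧ (X 0 + X 1 ∣ θ 0 + θ 1) ∧
    (X 0 - X 1 + X 2 ∣ θ 0 - θ 1 + θ 2) ∧ (X 0 - X 1 - X 3 ∣ θ 0 - θ 1 - θ 3) ∧
    (X 0 + X 1 - X 2 - X 3 ∣ θ 0 + θ 1 - θ 2 - θ 3) := by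
  simp only [derivModule, Submodule.mem_iInf, Submodule.mem_comap, Ideal.mem_span_singleton,
    derMap_linForm]
  simp [Fin.forall_fin_succ, linForm, A69, Fin.sum_univ_four, sub_eq_add_neg]

theorem eval_quotients_eq {fa fz fw fd : S4}
    (h : (X 0 + X 1) * fa - X 2 * fz - X 3 * fw = (X 0 + X 1 - X 2 - X 3) * fd) :
    eval quadruplePoint (fz - fa) = 0 ∧ eval quadruplePoint (fw - fa) = 0 := by
  have h1 := congrArg (fun f => eval quadruplePoint (pderiv 1 f)) h
  have h2 := congrArg (fun f => eval quadruplePoint (pderiv 2 f)) h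
  have h3 := congrArg (fun f => eval quadruplePoint (pderiv 3 f)) h
  simp [pderiv_X, quadruplePoint] at h1 h2 h3
  simp [quadruplePoint, h1, h2, h3]

/-- Restriction of polynomials to a line through `quadruplePoint`. -/
noncomputable def restrictLine : S4 →ₐ[ℂ] Polynomial ℂ :=
  aeval ![1, Polynomial.X - 1, 0, 0]

theorem X_dvd_restrictLine_iff (f : S4) :
    Polynomial.X ∣ restrictLine f ↔ eval quadruplePoint f = 0 := by
  have h : ((Polynomial.aeval (0 : ℂ)).comp restrictLine) = aeval quadruplePoint := by
    ext i
    fin_cases i <;> simp [restrictLine, quadruplePoint]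
  rw [Polynomial.X_dvd_iff, Polynomial.coeff_zero_eq_eval_zero]
  have := DFunLike.congr_fun h f
  rw [AlgHom.comp_apply, Polynomial.coe_aeval_eq_eval, aeval_eq_eval] at this
  rw [this]

/-- The determinant of derivations of `A69` is divisible by three forms through
`quadruplePoint`, with a quotient of multiplicity at least two there. -/
theorem exists_det_eq (B : Matrix (Fin 4) (Fin 4) S4) (hB : ∀ i, B i ∈ derivModule A69) :
    ∃ g : S4, B.det = (X 0 + X 1) * X 2 * X 3 * g ∧ Polynomial.X ^ 2 ∣ restrictLine g := by
  simp only [mem_derivModule_A69] at hB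
  choose _ _ hz hw ha _ _ hd using hB
  choose fz hz using hz
  choose fw hw using hw
  choose fa ha using ha
  choose fd hd using hd
  have key (i) := eval_quotients_eq (fa := fa i) (fz := fz i) (fw := fw i) (fd := fd i)
    (by rw [← ha, ← hz, ← hw, hd])
  simp only [← X_dvd_restrictLine_iff] at key
  choose hu hv using key
  choose u hu using hu
  choose v hv using hv
  let G : Matrix (Fin 4) (Fin 4) S4 :=
    Matrix.of fun i => ![B i 0, fa i, fz i - fa i, fw i - fa i]
  let N : Matrix (Fin 4) (Fin 4) S4 :=
    !![1, -1, 0, 0; 0, X 0 + X 1, X 2, X 3; 0, 0, X 2, 0; 0, 0, 0, X 3]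
  have hGN : B = G * N := by
    ext1 i j
    rw [Matrix.mul_apply, Fin.sum_univ_four]
    fin_cases j
    · simp [G, N]
    · simp only [G, N]
      simp
      linear_combination ha i
    · simp [G, N, hz]
      ring
    · simp [G, N, hw]
      ring
  refine ⟨G.det, ?_, ?_⟩
  · have hN : N.det = (X 0 + X 1) * X 2 * X 3 := by
      rw [Matrix.det_of_isUpperTriangular]
      · simp [N, Fin.prod_univ_four]
      · intro i j hij
        fin_cases i <;> fin_cases j <;> simp [N] at hij ⊢
    rw [hGN, Matrix.det_mul, hN, mul_comm]
  · have : restrictLine.mapMatrix G =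
        (Matrix.of fun i => ![restrictLine (B i 0), restrictLine (fa i), u i, v i]) *
          Matrix.diagonal ![1, 1, Polynomial.X, Polynomial.X] := by
      ext1 i j
      rw [Matrix.mul_diagonal]
      fin_cases j
      · simp [G]
      · simp [G]
      · simpa [G, mul_comm] using hu i
      · simpa [G, mul_comm] using hv i
    rw [AlgHom.map_det, this, Matrix.det_mul, Matrix.det_diagonal]
    simp [Fin.prod_univ_four, ← sq]

/-- Derivations of `A69`, independent over the fraction field, whose determinant has the factor
`x + y` in excess. -/
noncomputable def derMatrixA : Matrix (Fin 4) (Fin 4) S4 :=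
  awayForms • !![1, -1, 0, 0; 0, X 0 + X 1, X 2, X 3;
    0, (X 0 + X 1) * X 2, (X 0 + X 1) * X 2, 0; 0, (X 0 + X 1) * X 3, 0, (X 0 + X 1) * X 3]

/-- Derivations of `A69`, independent over the fraction field, whose determinant has the factor
`z` in excess. -/
noncomputable def derMatrixB : Matrix (Fin 4) (Fin 4) S4 :=
  awayForms • !![1, -1, 0, 0; 0, X 0 + X 1, X 2, X 3;
    0, (X 0 + X 1) * X 2, (X 0 + X 1) * X 2, 0; 0, 0, X 2 * X 3, -(X 2 * X 3)]

theorem awayForms_mul_mem {θ : Fin 4 → S4} (hz : X 2 ∣ θ 2) (hw : X 3 ∣ θ 3)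
    (ha : X 0 + X 1 ∣ θ 0 + θ 1) (hd : X 0 + X 1 - X 2 - X 3 ∣ θ 0 + θ 1 - θ 2 - θ 3) :
    awayForms • θ ∈ derivModule A69 := by
  have h0 : X 0 ∣ awayForms := ⟨X 1 * (X 0 - X 1 + X 2) * (X 0 - X 1 - X 3), by
    rw [awayForms]; ring⟩
  have h1 : X 1 ∣ awayForms := ⟨X 0 * (X 0 - X 1 + X 2) * (X 0 - X 1 - X 3), by
    rw [awayForms]; ring⟩
  have h2 : X 0 - X 1 + X 2 ∣ awayForms := ⟨X 0 * X 1 * (X 0 - X 1 - X 3), by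
    rw [awayForms]; ring⟩
  have h3 : X 0 - X 1 - X 3 ∣ awayForms := ⟨X 0 * X 1 * (X 0 - X 1 + X 2), by
    rw [awayForms]; ring⟩
  simp only [mem_derivModule_A69, Pi.smul_apply, smul_eq_mul, ← mul_add, ← mul_sub]
  exact ⟨h0.mul_right _, h1.mul_right _, hz.mul_left _, hw.mul_left _, ha.mul_left _,
    h2.mul_right _, h3.mul_right _, hd.mul_left _⟩

theorem derMatrixA_mem (i : Fin 4) : derMatrixA i ∈ derivModule A69 := by
  refine awayForms_mul_mem (θ := (!![1, -1, 0, 0; 0, X 0 + X 1, X 2, X 3;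
    0, (X 0 + X 1) * X 2, (X 0 + X 1) * X 2, 0;
    0, (X 0 + X 1) * X 3, 0, (X 0 + X 1) * X 3] : Matrix (Fin 4) (Fin 4) S4) i) ?_ ?_ ?_ ?_ <;>
  fin_cases i <;> simp

theorem derMatrixB_mem (i : Fin 4) : derMatrixB i ∈ derivModule A69 := by
  refine awayForms_mul_mem (θ := (!![1, -1, 0, 0; 0, X 0 + X 1, X 2, X 3;
    0, (X 0 + X 1) * X 2, (X 0 + X 1) * X 2, 0;
    0, 0, X 2 * X 3, -(X 2 * X 3)] : Matrix (Fin 4) (Fin 4) S4) i) ?_ ?_ ?_ ?_ <;>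
  fin_cases i <;> simp

theorem det_derMatrixA : derMatrixA.det = (X 0 + X 1) * X 2 * X 3 *
    (awayForms ^ 4 * (X 0 + X 1 - X 2 - X 3) * (X 0 + X 1)) := by
  rw [derMatrixA, Matrix.det_smul]
  simp [Matrix.det_succ_row_zero, Fin.sum_univ_succ, Fin.succAbove]
  ring

theorem det_derMatrixB : derMatrixB.det = (X 0 + X 1) * X 2 * X 3 *
    (awayForms ^ 4 * (X 0 + X 1 - X 2 - X 3) * -X 2) := by
  rw [derMatrixB, Matrix.det_smul]
  simp [Matrix.det_succ_row_zero, Fin.sum_univ_succ, Fin.succAbove]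
  ring

theorem det_derMatrixA_ne_zero : derMatrixA.det ≠ 0 := by
  intro h
  have := congrArg (eval ![3, 5, 1, 1]) h
  simp [det_derMatrixA, awayForms] at this
  norm_num at this

theorem dvd_of_dvd_mul_dvd_mul {R : Type*} [CommRing R] [IsDomain R] {g m a p : R}
    (hp : Prime p) (hpa : ¬ p ∣ a) (hm : m * a ≠ 0) (ha : g ∣ m * a) (hpm : g ∣ m * p) :
    g ∣ m := by
  obtain ⟨k, hk⟩ := ha
  obtain ⟨l, hl⟩ := hpm
  have hg : g ≠ 0 := by
    rintro rfl
    exact hm (by rw [hk, zero_mul])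
  have h : p * k = l * a := mul_left_cancel₀ hg (by linear_combination a * hl - p * hk)
  obtain ⟨q, rfl⟩ := (hp.dvd_or_dvd ⟨k, h.symm⟩).resolve_right hpa
  exact ⟨q, mul_right_cancel₀ hp.ne_zero (by linear_combination hl)⟩

theorem det_dvd_det_of_basis {R : Type*} [CommRing R] {n : Type*} [Fintype n] [DecidableEq n]
    {M : Submodule R (n → R)} (b : Module.Basis n R M) (A : Matrix n n R) (hA : ∀ i, A i ∈ M) :
    (Matrix.of fun i => (b i : n → R)).det ∣ A.det := by
  have h : A = (Matrix.of fun i j => b.repr ⟨A i, hA i⟩ j) *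
      Matrix.of fun i => (b i : n → R) := by
    ext i j
    have := congrArg (fun θ : M => (θ : n → R) j) (b.sum_repr ⟨A i, hA i⟩)
    simp only [Submodule.coe_sum, Submodule.coe_smul, Finset.sum_apply, Pi.smul_apply,
      smul_eq_mul] at this
    exact this.symm
  rw [h, Matrix.det_mul]
  exact dvd_mul_left _ _

theorem finrank_derivModule_A69 : Module.finrank S4 (derivModule A69) = 4 := by
  apply le_antisymm
  · simpa using Submodule.finrank_le (derivModule A69)
  · have h : LinearIndependent S4 derMatrixA.row :=
      Matrix.linearIndependent_rows_of_det_ne_zero det_derMatrixA_ne_zero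
    have h' : LinearIndependent S4 fun i => (⟨derMatrixA i, derMatrixA_mem i⟩ : derivModule A69) :=
      LinearIndependent.of_comp (derivModule A69).subtype h
    simpa using h'.fintype_card_le_finrank

/-- The derivation module of 𝒜₆₉ is not a free `S`-module. -/
theorem not_free_A69 : ¬ Module.Free S4 ↥(derivModule A69) := by
  intro _
  let b := Module.finBasisOfFinrankEq S4 (derivModule A69) finrank_derivModule_A69
  obtain ⟨g, hg, hX⟩ := exists_det_eq (Matrix.of fun i => (b i : Fin 4 → S4)) fun i => (b i).2
  have hA := det_dvd_det_of_basis b derMatrixA derMatrixA_mem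
  have hB := det_dvd_det_of_basis b derMatrixB derMatrixB_mem
  have hA0 := det_derMatrixA_ne_zero
  rw [det_derMatrixA] at hA0
  rw [hg, det_derMatrixA, mul_dvd_mul_iff_left (left_ne_zero_of_mul hA0)] at hA
  rw [hg, det_derMatrixB, mul_dvd_mul_iff_left (left_ne_zero_of_mul hA0), mul_neg,
    dvd_neg] at hB
  have hna : ¬ (X 2 : S4) ∣ X 0 + X 1 := by
    rintro ⟨q, hq⟩
    simpa using congrArg (eval ![1, 0, 0, 0]) hq
  have h := map_dvd restrictLine
    (dvd_of_dvd_mul_dvd_mul X_prime hna (right_ne_zero_of_mul hA0) hA hB)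
  have h2 : Polynomial.X * Polynomial.X ∣ Polynomial.X * restrictLine (awayForms ^ 4) := by
    have h3 : restrictLine (X 0 + X 1 - X 2 - X 3) = Polynomial.X := by simp [restrictLine]
    rw [map_mul, h3, mul_comm] at h
    exact (sq (Polynomial.X : Polynomial ℂ)) ▸ hX.trans h
  rw [mul_dvd_mul_iff_left Polynomial.X_ne_zero, X_dvd_restrictLine_iff] at h2
  simp [awayForms, quadruplePoint] at h2
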